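/- For every integer D ≥ 2, w ≥ 1 and q ≥ 2 there exists a constant c > 0 (depending only on D, w and q) such that the following holds: for every L ≥ 1, every commuting-projector code on the lattice Λ = (Fin L)^D whose projector supports S_a are each contained in some w×…×w cube of the lattice, and every d ≥ 1 such that every region M ⊆ Λ with |M| < d is correctable, the number of encoded qubits satisfies k = log₂(rank Π) ≤ c·n/d^{2/(D−1)}, where n = L^D. -/

import Mathlib

/-!
The proof splits the lattice into two correctable regions `A` and `B` and a remainder `C`, shows
that `rank Π ≤ q ^ |C|`, and chooses the splitting so that `|C| = O(n / d ^ (2 / (D - 1)))`.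

*Rank bound.* Let `r_A` be the rank of the reduced density matrix on `A` of the maximally mixed
code state, and `K = rank Π`. If a purifying reference system is added, the Knill–Laflamme
condition for `A` says that `A` is uncorrelated with the reference, so `r_A * K` is the rank of
the reduced state on `BC`, and hence is at most `r_B * q ^ |C|`. Exchanging `A` and `B` and
multiplying gives `K ≤ q ^ |C|`. With ranks instead of von Neumann entropies no analysis is needed;
the relevant matrices are flattenings of `Π` (`half_tradeoff`, `tripartite_tradeoff`,
`CommProjCode.rank_proj_le`).

*Correctable regions.* A union of correctable regions is correctable if no constraint meets two of
them (`Correctable.union`, `Correctable.of_clusters`). If `A` is correctable, `B` is correctable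
and all constraints meeting `A` are supported on `A ∪ B`, then `A ∪ B` is correctable
(`Correctable.expand`). Growing a cube by shells of thickness `w`, each with fewer than `d` sites,
shows that cubes of side of order `d ^ (1 / (D - 1))` are correctable (`correctable_cube`).

*Decomposition.* Cut the lattice by parallel walls of thickness `w` at spacing
`R ~ d ^ (1 / (D - 1))` in every direction. The cells between the walls form `A`. The walls with a
neighbourhood of their intersections removed fall apart into pieces with `w * R ^ (D - 1) < d`
sites, and form `B`. The rest `C` is near walls of two different directions, so it has density
`O(1 / R ^ 2)` (`exists_decomposition`).
-/

open Matrix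
open scoped Kronecker

noncomputable section

/-- The natural reindexing of configurations `Λ → Fin q` as pairs of configurations
on a region `S` and its complement. -/
def siteSplit (q : ℕ) {Λ : Type*} [DecidableEq Λ] (S : Finset Λ) :
    (Λ → Fin q) ≃ ({u : Λ // u ∈ S} → Fin q) × ({u : Λ // u ∉ S} → Fin q) :=
  (Equiv.arrowCongr (Equiv.sumCompl (fun u : Λ => u ∈ S)).symm (Equiv.refl (Fin q))).trans
    (Equiv.sumArrowEquivProdArrow _ _ _)

/-- An operator is supported on `S ⊆ Λ` if, after the natural reindexing, it is the
Kronecker product of a matrix acting on the `S`-factor with the identity on the complement. -/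
def SupportedOn (q : ℕ) {Λ : Type*} [Fintype Λ] [DecidableEq Λ] (S : Finset Λ)
    (O : Matrix (Λ → Fin q) (Λ → Fin q) ℂ) : Prop :=
  ∃ A : Matrix ({u : Λ // u ∈ S} → Fin q) ({u : Λ // u ∈ S} → Fin q) ℂ,
    O.submatrix (siteSplit q S).symm (siteSplit q S).symm =
      A ⊗ₖ (1 : Matrix ({u : Λ // u ∉ S} → Fin q) ({u : Λ // u ∉ S} → Fin q) ℂ)

/-- A commuting-projector code on the set of sites `Λ`, with qudits of dimension `q`:
pairwise commuting orthogonal projectors `P a` supported on regions `S a`, whose product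
(the codespace projector) is nonzero. -/
structure CommProjCode (q : ℕ) (Λ : Type*) [Fintype Λ] [DecidableEq Λ] where
  m : ℕ
  S : Fin m → Finset Λ
  P : Fin m → Matrix (Λ → Fin q) (Λ → Fin q) ℂ
  herm : ∀ a, (P a).IsHermitian
  idem : ∀ a, P a * P a = P a
  comm : ∀ a b, P a * P b = P b * P a
  supp : ∀ a, SupportedOn q (S a) (P a)
  nonzero : ((List.finRange m).map P).prod ≠ 0

namespace CommProjCode

variable {q : ℕ} {Λ : Type*} [Fintype Λ] [DecidableEq Λ]

/-- The codespace projector `Π = Π_1 ⋯ Π_m`. -/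
def proj (code : CommProjCode q Λ) : Matrix (Λ → Fin q) (Λ → Fin q) ℂ :=
  ((List.finRange code.m).map code.P).prod

/-- A region `M` is correctable iff `Π O Π = c(O) Π` for every operator `O` supported
on `M` (the Knill–Laflamme condition for the erasure of `M`). -/
def Correctable (code : CommProjCode q Λ) (M : Finset Λ) : Prop :=
  ∀ O : Matrix (Λ → Fin q) (Λ → Fin q) ℂ, SupportedOn q M O →
    ∃ c : ℂ, code.proj * O * code.proj = c • code.proj

end CommProjCode

/-! ### Rank inequalities -/

lemma exists_rank_factor {m n : Type*} [Fintype m] [Fintype n] [DecidableEq n]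
    (A : Matrix m n ℂ) :
    ∃ (X : Matrix m (Fin A.rank) ℂ) (Y : Matrix (Fin A.rank) n ℂ), A = X * Y := by
  classical
  let b : Module.Basis (Fin A.rank) ℂ (LinearMap.range A.mulVecLin) :=
    Module.finBasisOfFinrankEq _ _ rfl
  refine ⟨Matrix.of fun i k => (b k : m → ℂ) i,
    Matrix.of fun k j => b.repr ⟨A.mulVecLin (Pi.single j 1), LinearMap.mem_range_self _ _⟩ k, ?_⟩
  ext i j
  have h := b.sum_repr ⟨A.mulVecLin (Pi.single j 1), LinearMap.mem_range_self _ _⟩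
  have h2 := congrFun (congrArg Subtype.val h) i
  simp only [Matrix.mul_apply, Matrix.of_apply]
  rw [AddSubmonoidClass.coe_finsetSum, Finset.sum_apply] at h2
  have h3 : (A.mulVecLin (Pi.single j 1)) i = A i j := by simp
  exact h3.symm.trans (h2.symm.trans (Finset.sum_congr rfl fun k _ => mul_comm _ _))

lemma eq_zero_of_rank_eq_zero {m n : Type*} [Fintype m] [Fintype n] [DecidableEq n]
    {A : Matrix m n ℂ} (h : A.rank = 0) : A = 0 := by
  obtain ⟨X, Y, hXY⟩ := exists_rank_factor A
  have : IsEmpty (Fin A.rank) := by rw [h]; infer_instance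
  rw [hXY]
  ext i j
  simp [Matrix.mul_apply]

/-- A matrix of rank `r` can be compressed, on both sides, to the `r × r` identity. -/
lemma exists_mul_mul_eq_one {m : Type*} [Fintype m] [DecidableEq m] (M : Matrix m m ℂ) :
    ∃ (X : Matrix (Fin M.rank) m ℂ) (Y : Matrix m (Fin M.rank) ℂ), X * M * Y = 1 := by
  obtain ⟨V, U, e, -, -, h⟩ := M.exists_rank_normal_form
  refine ⟨V.submatrix (fun i => e.symm (Sum.inl i)) id,
    U.submatrix id (fun i => e.symm (Sum.inl i)), ?_⟩
  ext i j
  have := congrFun (congrFun h (e.symm (Sum.inl i))) (e.symm (Sum.inl j))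
  simpa [Matrix.mul_apply, Matrix.submatrix_apply] using this

lemma rank_mul_rank_le_rank_kronecker {m n : Type*} [Fintype m] [Fintype n]
    [DecidableEq m] [DecidableEq n] (G : Matrix m m ℂ) (H : Matrix n n ℂ) :
    G.rank * H.rank ≤ (G ⊗ₖ H).rank := by
  obtain ⟨X, Y, h⟩ := exists_mul_mul_eq_one G
  obtain ⟨X', Y', h'⟩ := exists_mul_mul_eq_one H
  have key : (X ⊗ₖ X') * (G ⊗ₖ H) * (Y ⊗ₖ Y') = 1 := by
    rw [← mul_kronecker_mul, ← mul_kronecker_mul, h, h', one_kronecker_one]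
  have h1 := Matrix.rank_one (n := Fin G.rank × Fin H.rank) (R := ℂ)
  rw [← key] at h1
  have h2 := (rank_mul_le_left ((X ⊗ₖ X') * (G ⊗ₖ H)) (Y ⊗ₖ Y')).trans
    (rank_mul_le_right (X ⊗ₖ X') (G ⊗ₖ H))
  rw [h1] at h2
  simpa using h2

/-- Moving an index `γ` from the columns of a matrix to its rows multiplies the rank by at
most `|γ|`. -/
lemma rank_regroup_le {β γ κ : Type*} [Fintype β] [Fintype γ] [Fintype κ]
    [DecidableEq β] [DecidableEq γ] [DecidableEq κ] (A : Matrix β (γ × κ) ℂ)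
    (M : Matrix (β × γ) κ ℂ) (h : ∀ b c y, M (b, c) y = A b (c, y)) :
    M.rank ≤ A.rank * Fintype.card γ := by
  obtain ⟨X, Y, hXY⟩ := exists_rank_factor A
  have : M = (X ⊗ₖ (1 : Matrix γ γ ℂ)) *
      (Matrix.of fun (i : Fin A.rank × γ) (y : κ) => Y i.1 (i.2, y)) := by
    ext ⟨b, c⟩ y
    rw [h, congrFun (congrFun hXY b) (c, y)]
    simp [Matrix.mul_apply, Fintype.sum_prod_type, Matrix.one_apply]
  rw [this]
  refine (rank_mul_le_left _ _).trans ((rank_le_card_width _).trans ?_)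
  simp

open scoped ComplexOrder in
/-- One half of the tradeoff. Here `κ` is the set of configurations, split by `f` into three
factors, and `hc` is the Knill–Laflamme condition for matrix units on `α`. Writing `r_α` for the
rank of `P`, flattened with `α` as row index, the claim is `r_α * rank P ≤ r_β * |γ|`.
The Gram matrix of the flattening along `β × γ` is `c ⊗ P` by `hc`, and `r_α ≤ rank c`. -/
lemma half_tradeoff {α β γ κ : Type*} [Fintype α] [Fintype β] [Fintype γ] [Fintype κ]
    [DecidableEq α] [DecidableEq β] [DecidableEq γ] [DecidableEq κ]
    (P : Matrix κ κ ℂ) (f : α → β → γ → κ) (hherm : P.IsHermitian) (c : α → α → ℂ)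
    (hc : ∀ p p' y y', ∑ b, ∑ g, P y (f p b g) * P (f p' b g) y' = c p p' * P y y')  :
    (Matrix.of fun (a : α) (x : β × γ × κ) => P (f a x.1 x.2.1) x.2.2).rank * P.rank ≤
      (Matrix.of fun (b : β) (x : γ × α × κ) => P (f x.2.1 b x.1) x.2.2).rank
        * Fintype.card γ := by
  classical
  have hH : ∀ x y, star (P x y) = P y x := fun x y => hherm.apply y x
  set MA : Matrix α (β × γ × κ) ℂ := Matrix.of fun (a : α) (x : β × γ × κ) =>
    P (f a x.1 x.2.1) x.2.2 with hMA
  set M1 : Matrix (β × γ) (α × κ) ℂ := Matrix.of fun x y => P (f y.1 x.1 x.2) y.2 with hM1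
  have h1 : M1ᴴ * M1 = (Matrix.of c) ⊗ₖ P := by
    ext ⟨a, y⟩ ⟨a', y'⟩
    simp only [Matrix.mul_apply, conjTranspose_apply, hM1, Matrix.of_apply, kroneckerMap_apply,
      hH, Fintype.sum_prod_type]
    exact hc a a' y y'
  have h2 : MA * MAᴴ = (Matrix.of c)ᵀ * (P.trace • (1 : Matrix α α ℂ)) := by
    ext a a'
    simp only [Matrix.mul_apply, conjTranspose_apply, hMA, Matrix.of_apply,
      hH, Fintype.sum_prod_type, Matrix.transpose_apply]
    have : ∑ y, (∑ b, ∑ g, P y (f a' b g) * P (f a b g) y) = c a' a * P.trace := by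
      rw [Finset.sum_congr rfl fun y _ => hc a' a y y, ← Finset.mul_sum]; rfl
    rw [Finset.sum_comm' (t' := Finset.univ) (s' := fun _ => Finset.univ) (by simp)] at this
    simp [Matrix.one_apply]
    rw [← this]
    refine Finset.sum_congr rfl fun b _ => ?_
    rw [Finset.sum_comm]
    exact Finset.sum_congr rfl fun g _ => Finset.sum_congr rfl fun y _ => mul_comm _ _
  have h3 : MA.rank ≤ (Matrix.of c).rank := by
    rw [← rank_self_mul_conjTranspose, h2]
    exact (rank_mul_le_left _ _).trans (rank_transpose _).le
  calc MA.rank * P.rank ≤ (Matrix.of c).rank * P.rank := Nat.mul_le_mul_right _ h3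
    _ ≤ ((Matrix.of c) ⊗ₖ P).rank := rank_mul_rank_le_rank_kronecker _ _
    _ = M1.rank := by rw [← h1, rank_conjTranspose_mul_self]
    _ ≤ _ := rank_regroup_le _ _ fun b c y => rfl

/-- If both `α` and `β` are correctable, multiplying the inequalities
`r_α * rank P ≤ r_β * |γ|` and `r_β * rank P ≤ r_α * |γ|` and cancelling `r_α * r_β` bounds
`rank P` by `|γ|`. -/
lemma tripartite_tradeoff {α β γ κ : Type*} [Fintype α] [Fintype β] [Fintype γ] [Fintype κ]
    [DecidableEq α] [DecidableEq β] [DecidableEq γ] [DecidableEq κ]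
    (P : Matrix κ κ ℂ) (f : α → β → γ → κ)
    (hf : Function.Surjective fun x : α × β × γ => f x.1 x.2.1 x.2.2)
    (hherm : P.IsHermitian) (hne : P ≠ 0)
    (hA : ∀ p p', ∃ c : ℂ, ∀ y y', ∑ b, ∑ g, P y (f p b g) * P (f p' b g) y' = c * P y y')
    (hB : ∀ p p', ∃ c : ℂ, ∀ y y', ∑ a, ∑ g, P y (f a p g) * P (f a p' g) y' = c * P y y') :
    P.rank ≤ Fintype.card γ := by
  choose cA hcA using hA
  choose cB hcB using hB
  have h1 := half_tradeoff P f hherm cA hcA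
  have h2 := half_tradeoff P (fun b a g => f a b g) hherm cB hcB
  set rA := (Matrix.of fun (a : α) (x : β × γ × κ) => P (f a x.1 x.2.1) x.2.2).rank with hrA
  set rB := (Matrix.of fun (b : β) (x : α × γ × κ) => P (f x.1 b x.2.1) x.2.2).rank with hrB
  have e1 : (Matrix.of fun (b : β) (x : γ × α × κ) => P (f x.2.1 b x.1) x.2.2).rank = rB := by
    exact Matrix.rank_submatrix (Matrix.of fun (b : β) (x : α × γ × κ) => P (f x.1 b x.2.1) x.2.2)
      (Equiv.refl β) (⟨fun x => (x.2.1, x.1, x.2.2), fun x => (x.2.1, x.1, x.2.2),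
        fun _ => rfl, fun _ => rfl⟩ : γ × α × κ ≃ α × γ × κ)
  have e2 : (Matrix.of fun (a : α) (x : γ × β × κ) => P (f a x.2.1 x.1) x.2.2).rank = rA := by
    exact Matrix.rank_submatrix (Matrix.of fun (a : α) (x : β × γ × κ) => P (f a x.1 x.2.1) x.2.2)
      (Equiv.refl α) (⟨fun x => (x.2.1, x.1, x.2.2), fun x => (x.2.1, x.1, x.2.2),
        fun _ => rfl, fun _ => rfl⟩ : γ × β × κ ≃ β × γ × κ)
  rw [e1] at h1
  rw [e2] at h2
  obtain ⟨y, y', hy⟩ : ∃ y y', P y y' ≠ 0 := by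
    by_contra! h; exact hne (by ext; simp [h])
  obtain ⟨⟨a, b, g⟩, rfl⟩ := hf y
  have pA : 0 < rA := by
    refine Nat.pos_of_ne_zero fun h => hy ?_
    exact congrFun (congrFun (eq_zero_of_rank_eq_zero h) a) (b, g, y')
  have pB : 0 < rB := by
    refine Nat.pos_of_ne_zero fun h => hy ?_
    exact congrFun (congrFun (eq_zero_of_rank_eq_zero h) b) (a, g, y')
  by_contra! hlt
  have h3 : rA * rB * (P.rank * P.rank) ≤ rA * rB * (Fintype.card γ * Fintype.card γ) := by
    calc _ = (rA * P.rank) * (rB * P.rank) := by ring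
      _ ≤ (rB * Fintype.card γ) * (rA * Fintype.card γ) := Nat.mul_le_mul h1 h2
      _ = _ := by ring
  have h4 := Nat.le_of_mul_le_mul_left h3 (Nat.mul_pos pA pB)
  nlinarith

/-! ### Local operators -/

section Support

variable {q : ℕ} {Λ : Type*} [Fintype Λ] [DecidableEq Λ]

/-- The operator `A ⊗ I` acting as `A` on the region `S`. -/
def localOp (S : Finset Λ) (A : Matrix ({u : Λ // u ∈ S} → Fin q) ({u : Λ // u ∈ S} → Fin q) ℂ) :
    Matrix (Λ → Fin q) (Λ → Fin q) ℂ :=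
  (A ⊗ₖ (1 : Matrix ({u : Λ // u ∉ S} → Fin q) ({u : Λ // u ∉ S} → Fin q) ℂ)).submatrix
    (siteSplit q S) (siteSplit q S)

/-- The configuration equal to `a` on `S` and to `x` off `S`. -/
def glue (S : Finset Λ) (a : {u : Λ // u ∈ S} → Fin q) (x : Λ → Fin q) : Λ → Fin q :=
  fun u => if h : u ∈ S then a ⟨u, h⟩ else x u

lemma supportedOn_iff_localOp {S : Finset Λ} {O : Matrix (Λ → Fin q) (Λ → Fin q) ℂ} :
    SupportedOn q S O ↔ ∃ A, O = localOp S A := by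
  refine exists_congr fun A => ⟨fun h => ?_, fun h => ?_⟩
  · rw [localOp, ← h]; ext; simp
  · rw [h, localOp]; ext; simp

lemma localOp_apply (S : Finset Λ)
    (A : Matrix ({u : Λ // u ∈ S} → Fin q) ({u : Λ // u ∈ S} → Fin q) ℂ) (x y : Λ → Fin q) :
    localOp S A x y = if ∀ u ∉ S, x u = y u then A (fun u => x u) (fun u => y u) else 0 := by
  have h : (siteSplit q S x).2 = (siteSplit q S y).2 ↔ ∀ u ∉ S, x u = y u := by
    rw [funext_iff, Subtype.forall]; rfl
  simp only [localOp, submatrix_apply, kroneckerMap_apply, Matrix.one_apply, h, mul_ite, mul_one,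
    mul_zero]
  rfl

lemma localOp_mul (S : Finset Λ)
    (A B : Matrix ({u : Λ // u ∈ S} → Fin q) ({u : Λ // u ∈ S} → Fin q) ℂ) :
    localOp S A * localOp S B = localOp S (A * B) := by
  rw [localOp, localOp, localOp, submatrix_mul_equiv, ← mul_kronecker_mul, one_mul]

lemma localOp_one (S : Finset Λ) : localOp (q := q) S 1 = 1 := by
  rw [localOp, one_kronecker_one, submatrix_one_equiv]

lemma localOp_sum (S : Finset Λ) {ι : Type*} (s : Finset ι)
    (A : ι → Matrix ({u : Λ // u ∈ S} → Fin q) ({u : Λ // u ∈ S} → Fin q) ℂ) :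
    localOp S (∑ i ∈ s, A i) = ∑ i ∈ s, localOp S (A i) := by
  ext x y
  simp only [localOp_apply, Matrix.sum_apply]
  split_ifs <;> simp

lemma supportedOn_localOp (S : Finset Λ)
    (A : Matrix ({u : Λ // u ∈ S} → Fin q) ({u : Λ // u ∈ S} → Fin q) ℂ) :
    SupportedOn q S (localOp S A) := supportedOn_iff_localOp.2 ⟨A, rfl⟩

/-- Entrywise form of locality: `O` is diagonal in the coordinates off `S`, and its entries do not
depend on those coordinates. -/
lemma supportedOn_iff [NeZero q] {S : Finset Λ} {O : Matrix (Λ → Fin q) (Λ → Fin q) ℂ} :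
    SupportedOn q S O ↔ (∀ x y, (∃ u, u ∉ S ∧ x u ≠ y u) → O x y = 0) ∧
      ∀ x y z, (∀ u ∉ S, x u = y u) → O x y = O (S.piecewise x z) (S.piecewise y z) := by
  rw [supportedOn_iff_localOp]
  constructor
  · rintro ⟨A, rfl⟩
    refine ⟨fun x y ⟨u, hu, hxy⟩ => ?_, fun x y z h => ?_⟩
    · rw [localOp_apply, if_neg fun h => hxy (h u hu)]
    · rw [localOp_apply, localOp_apply, if_pos h, if_pos fun u hu => by simp [hu]]
      congr 1 <;> (ext ⟨u, hu⟩; simp [hu])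
  · rintro ⟨h0, h1⟩
    refine ⟨Matrix.of fun a b => O (glue S a 0) (glue S b 0), ?_⟩
    ext x y
    rw [localOp_apply]
    split_ifs with h
    · rw [h1 x y 0 h, Matrix.of_apply]
      rfl
    · push Not at h
      exact h0 x y h

lemma SupportedOn.mono [NeZero q] {S T : Finset Λ} {O : Matrix (Λ → Fin q) (Λ → Fin q) ℂ}
    (h : SupportedOn q S O) (hST : S ⊆ T) : SupportedOn q T O := by
  obtain ⟨h0, h1⟩ := supportedOn_iff.1 h
  refine supportedOn_iff.2 ⟨fun x y ⟨u, hu, hxy⟩ => h0 x y ⟨u, fun h => hu (hST h), hxy⟩,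
    fun x y z hxy => ?_⟩
  by_cases hS : ∀ u ∉ S, x u = y u
  · rw [h1 x y z hS, h1 (T.piecewise x z) _ z]
    · congr 1 <;> (ext u; by_cases hu : u ∈ S <;> simp [hu, hST _])
    · intro u hu
      by_cases hT : u ∈ T <;> simp [hT, hS u hu]
  · push Not at hS
    rw [h0 x y hS, h0]
    obtain ⟨u, hu, hne⟩ := hS
    have hT : u ∈ T := by by_contra hT; exact hne (hxy u hT)
    exact ⟨u, hu, by simpa [hT] using hne⟩

lemma SupportedOn.mul {S : Finset Λ} {O O' : Matrix (Λ → Fin q) (Λ → Fin q) ℂ}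
    (h : SupportedOn q S O) (h' : SupportedOn q S O') : SupportedOn q S (O * O') := by
  obtain ⟨A, rfl⟩ := supportedOn_iff_localOp.1 h
  obtain ⟨B, rfl⟩ := supportedOn_iff_localOp.1 h'
  exact supportedOn_iff_localOp.2 ⟨A * B, localOp_mul S A B⟩

lemma supportedOn_one (S : Finset Λ) : SupportedOn q S 1 :=
  supportedOn_iff_localOp.2 ⟨1, (localOp_one S).symm⟩

lemma supportedOn_sum {S : Finset Λ} {ι : Type*} (s : Finset ι)
    (O : ι → Matrix (Λ → Fin q) (Λ → Fin q) ℂ) (h : ∀ i ∈ s, SupportedOn q S (O i)) :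
    SupportedOn q S (∑ i ∈ s, O i) := by
  classical
  have : ∀ i, ∃ A, i ∈ s → O i = localOp S A := fun i => by
    by_cases hi : i ∈ s
    · obtain ⟨A, hA⟩ := supportedOn_iff_localOp.1 (h i hi)
      exact ⟨A, fun _ => hA⟩
    · exact ⟨0, fun h => absurd h hi⟩
  choose A hA using this
  exact supportedOn_iff_localOp.2 ⟨∑ i ∈ s, A i, by
    rw [localOp_sum]; exact Finset.sum_congr rfl hA⟩

lemma SupportedOn.commute [NeZero q] {S T : Finset Λ} {O O' : Matrix (Λ → Fin q) (Λ → Fin q) ℂ}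
    (h : SupportedOn q S O) (h' : SupportedOn q T O') (hd : Disjoint S T) : O * O' = O' * O := by
  obtain ⟨h0, h1⟩ := supportedOn_iff.1 h
  obtain ⟨h0', h1'⟩ := supportedOn_iff.1 h'
  have hdisj : ∀ u, u ∈ S → u ∉ T := fun u hu hT => Finset.disjoint_left.1 hd hu hT
  ext x y
  rw [Matrix.mul_apply, Matrix.mul_apply,
    Finset.sum_eq_single (T.piecewise x y), Finset.sum_eq_single (S.piecewise x y)]
  · by_cases hxy : ∀ u, u ∉ S → u ∉ T → x u = y u
    · rw [mul_comm]
      congr 1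
      · rw [h1' (T.piecewise x y) y x, h1' x (S.piecewise x y) x]
        · congr 1 <;> (ext u; have := hxy u; have := hdisj u; grind [Finset.piecewise])
        · intro u hu; have := hxy u; have := hdisj u; grind [Finset.piecewise]
        · intro u hu; have := hxy u; have := hdisj u; grind [Finset.piecewise]
      · rw [h1 x (T.piecewise x y) y, h1 (S.piecewise x y) y y]
        · congr 1 <;> (ext u; have := hxy u; have := hdisj u; grind [Finset.piecewise])
        · intro u hu; have := hxy u; have := hdisj u; grind [Finset.piecewise]
        · intro u hu; have := hxy u; have := hdisj u; grind [Finset.piecewise]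
    · push Not at hxy
      obtain ⟨u, huS, huT, hne⟩ := hxy
      rw [h0 x (T.piecewise x y) ⟨u, huS, by simpa [huT] using hne⟩,
        h0' x (S.piecewise x y) ⟨u, huT, by simpa [huS] using hne⟩, zero_mul, zero_mul]
  · intro z _ hz
    by_contra hne
    refine hz (funext fun u => ?_)
    have e1 : u ∉ T → x u = z u := fun hu => by
      by_contra hc; exact hne (by rw [h0' x z ⟨u, hu, hc⟩, zero_mul])
    have e2 : u ∉ S → z u = y u := fun hu => by
      by_contra hc; exact hne (by rw [h0 z y ⟨u, hu, hc⟩, mul_zero])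
    have := hdisj u
    grind [Finset.piecewise]
  · simp
  · intro z _ hz
    by_contra hne
    refine hz (funext fun u => ?_)
    have e1 : u ∉ S → x u = z u := fun hu => by
      by_contra hc; exact hne (by rw [h0 x z ⟨u, hu, hc⟩, zero_mul])
    have e2 : u ∉ T → z u = y u := fun hu => by
      by_contra hc; exact hne (by rw [h0' z y ⟨u, hu, hc⟩, mul_zero])
    have := hdisj u
    grind [Finset.piecewise]
  · simp

/-- The matrix unit `|a⟩⟨b|` on the region `S`, acting as the identity elsewhere. -/
def unitOp (S : Finset Λ) (a b : {u : Λ // u ∈ S} → Fin q) :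
    Matrix (Λ → Fin q) (Λ → Fin q) ℂ := localOp S (Matrix.single a b 1)

lemma supportedOn_unitOp (S : Finset Λ) (a b : {u : Λ // u ∈ S} → Fin q) :
    SupportedOn q S (unitOp S a b) := supportedOn_localOp _ _

lemma unitOp_apply (S : Finset Λ) (a b : {u : Λ // u ∈ S} → Fin q) (x y : Λ → Fin q) :
    unitOp S a b x y = if x = glue S a y ∧ y = glue S b x then 1 else 0 := by
  have : (x = glue S a y ∧ y = glue S b x) ↔
      ((∀ u ∉ S, x u = y u) ∧ (a = fun u : {u : Λ // u ∈ S} => x u) ∧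
        b = fun u : {u : Λ // u ∈ S} => y u) := by
    simp only [funext_iff, glue]
    constructor
    · rintro ⟨h1, h2⟩
      exact ⟨fun u hu => by simpa [hu] using h1 u,
        fun ⟨u, hu⟩ => by simpa [hu] using (h1 u).symm,
        fun ⟨u, hu⟩ => by simpa [hu] using (h2 u).symm⟩
    · rintro ⟨h0, h1, h2⟩
      refine ⟨fun u => ?_, fun u => ?_⟩
      · by_cases hu : u ∈ S
        · simpa [hu] using (h1 ⟨u, hu⟩).symm
        · simpa [hu] using h0 u hu
      · by_cases hu : u ∈ S
        · simpa [hu] using (h2 ⟨u, hu⟩).symm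
        · simpa [hu] using (h0 u hu).symm
  simp only [unitOp, localOp_apply, Matrix.single_apply, this, ite_and]

lemma unitOp_mul_apply (S : Finset Λ) (a b : {u : Λ // u ∈ S} → Fin q)
    (O : Matrix (Λ → Fin q) (Λ → Fin q) ℂ) (x y : Λ → Fin q) :
    (unitOp S a b * O) x y = if x = glue S a x then O (glue S b x) y else 0 := by
  rw [Matrix.mul_apply, Finset.sum_eq_single (glue S b x)]
  · rw [unitOp_apply]
    have : glue S a (glue S b x) = glue S a x := by
      ext u; by_cases hu : u ∈ S <;> simp [glue, hu]
    simp only [this, and_true, ite_mul, one_mul, zero_mul]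
  · intro z _ hz
    rw [unitOp_apply, if_neg fun h => hz h.2, zero_mul]
  · simp

lemma mul_unitOp_apply (S : Finset Λ) (a b : {u : Λ // u ∈ S} → Fin q)
    (O : Matrix (Λ → Fin q) (Λ → Fin q) ℂ) (x y : Λ → Fin q) :
    (O * unitOp S a b) x y = if y = glue S b y then O x (glue S a y) else 0 := by
  rw [Matrix.mul_apply, Finset.sum_eq_single (glue S a y)]
  · rw [unitOp_apply]
    have : glue S b (glue S a y) = glue S b y := by
      ext u; by_cases hu : u ∈ S <;> simp [glue, hu]
    simp only [this, true_and, mul_ite, mul_one, mul_zero]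
  · intro z _ hz
    rw [unitOp_apply, if_neg fun h => hz h.1, mul_zero]
  · simp

lemma unitOp_mul_same (S : Finset Λ) (a b c : {u : Λ // u ∈ S} → Fin q) :
    unitOp S a b * unitOp S b c = unitOp S a c := by
  rw [unitOp, unitOp, localOp_mul, Matrix.single_mul_single_same, mul_one]; rfl

lemma unitOp_mul_of_ne (S : Finset Λ) (a : {u : Λ // u ∈ S} → Fin q)
    {b c : {u : Λ // u ∈ S} → Fin q} (d : {u : Λ // u ∈ S} → Fin q) (h : b ≠ c) :
    unitOp S a b * unitOp S c d = 0 := by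
  rw [unitOp, unitOp, localOp_mul, Matrix.single_mul_single_of_ne (h := h)]
  ext; simp [localOp_apply]

lemma sum_unitOp (S : Finset Λ) : ∑ a, unitOp (q := q) S a a = 1 := by
  simp only [unitOp]
  rw [← localOp_sum, Matrix.sum_single_one, localOp_one]

/-- The matrix element `⟨a| O |b⟩` on the region `S`, an operator acting trivially on `S`. -/
def partialElem (S : Finset Λ) (a b : {u : Λ // u ∈ S} → Fin q)
    (O : Matrix (Λ → Fin q) (Λ → Fin q) ℂ) : Matrix (Λ → Fin q) (Λ → Fin q) ℂ :=
  ∑ c, unitOp S c a * O * unitOp S b c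

lemma partialElem_apply (S : Finset Λ) (a b : {u : Λ // u ∈ S} → Fin q)
    (O : Matrix (Λ → Fin q) (Λ → Fin q) ℂ) (x y : Λ → Fin q) :
    partialElem S a b O x y =
      if ∀ u ∈ S, x u = y u then O (glue S a x) (glue S b y) else 0 := by
  have key : ∀ (z : Λ → Fin q) (c : {u : Λ // u ∈ S} → Fin q),
      z = glue S c z ↔ c = fun u : {u : Λ // u ∈ S} => z u := fun z c => by
    simp only [funext_iff, glue]
    constructor
    · rintro h ⟨u, hu⟩; simpa [hu] using (h u).symm
    · intro h u
      by_cases hu : u ∈ S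
      · simpa [hu] using (h ⟨u, hu⟩).symm
      · simp [hu]
  have hxy : ((fun u : {u : Λ // u ∈ S} => x u) = fun u : {u : Λ // u ∈ S} => y u) ↔ ∀ u ∈ S, x u = y u := by
    rw [funext_iff, Subtype.forall]
  simp only [partialElem, Matrix.sum_apply, mul_unitOp_apply, unitOp_mul_apply, key]
  rw [Finset.sum_eq_single (fun u : {u : Λ // u ∈ S} => y u)]
  · simp only [if_true, ← hxy, eq_comm]
  · intro c _ hc
    rw [if_neg hc]
  · simp

lemma supportedOn_partialElem [NeZero q] {A B : Finset Λ}
    {O : Matrix (Λ → Fin q) (Λ → Fin q) ℂ} (hO : SupportedOn q (A ∪ B) O)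
    (a b : {u : Λ // u ∈ A} → Fin q) : SupportedOn q B (partialElem A a b O) := by
  have hO' : SupportedOn q (A ∪ (B \ A)) O := by rwa [Finset.union_sdiff_self_eq_union]
  refine SupportedOn.mono (S := B \ A) ?_ Finset.sdiff_subset
  obtain ⟨h0, h1⟩ := supportedOn_iff.1 hO'
  have hd : ∀ u, u ∈ A → u ∉ B \ A := fun u hu h => (Finset.mem_sdiff.1 h).2 hu
  generalize B \ A = B at *
  refine supportedOn_iff.2 ⟨fun x y ⟨u, hu, hxy⟩ => ?_, fun x y z hxy => ?_⟩
  · rw [partialElem_apply]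
    split_ifs with h
    · have hA : u ∉ A := fun hA => hxy (h u hA)
      exact h0 _ _ ⟨u, by simp [hu, hA], by simpa [glue, hA] using hxy⟩
    · rfl
  · rw [partialElem_apply, partialElem_apply, if_pos fun u hu => hxy u (hd u hu),
      if_pos fun u hu => by simp [hd u hu]]
    rw [h1 (glue A a x) _ z, h1 (glue A a (B.piecewise x z)) _ z]
    · congr 1 <;> (ext u; have := hd u; grind [Finset.piecewise, glue])
    · intro u hu; have := hd u; have := hxy u; grind [Finset.piecewise, glue]
    · intro u hu; have := hd u; have := hxy u; grind [Finset.piecewise, glue]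

/-- Every operator is a combination of matrix units on `S` with coefficients acting off `S`. -/
lemma sum_unitOp_mul_partialElem (S : Finset Λ) (O : Matrix (Λ → Fin q) (Λ → Fin q) ℂ) :
    ∑ a, ∑ b, unitOp S a b * partialElem S a b O = O := by
  have : ∀ a b, unitOp S a b * partialElem S a b O = unitOp S a a * O * unitOp S b b := by
    intro a b
    rw [partialElem, Finset.mul_sum, Finset.sum_eq_single b]
    · rw [← mul_assoc, ← mul_assoc, unitOp_mul_same]
    · intro c _ hc
      rw [← mul_assoc, ← mul_assoc, unitOp_mul_of_ne _ _ _ hc.symm, zero_mul, zero_mul]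
    · simp
  simp only [this, ← Finset.mul_sum, sum_unitOp, mul_one]
  rw [← Finset.sum_mul, sum_unitOp, one_mul]

end Support

/-! ### Correctable regions -/

lemma unitOp_conjTranspose {q : ℕ} {Λ : Type*} [Fintype Λ] [DecidableEq Λ] (S : Finset Λ)
    (a b : {u : Λ // u ∈ S} → Fin q) : (unitOp S a b)ᴴ = unitOp S b a := by
  ext x y
  simp only [conjTranspose_apply, unitOp_apply, and_comm]
  split_ifs <;> simp

namespace CommProjCode

variable {q : ℕ} {Λ : Type*} [Fintype Λ] [DecidableEq Λ] (code : CommProjCode q Λ)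

/-- The product of the projectors listed in `l`. -/
def listProj (l : List (Fin code.m)) : Matrix (Λ → Fin q) (Λ → Fin q) ℂ := (l.map code.P).prod

lemma listProj_cons (a : Fin code.m) (l : List (Fin code.m)) :
    code.listProj (a :: l) = code.P a * code.listProj l := by
  simp [listProj]

lemma listProj_comm_of {l : List (Fin code.m)} {O : Matrix (Λ → Fin q) (Λ → Fin q) ℂ}
    (h : ∀ a ∈ l, code.P a * O = O * code.P a) : code.listProj l * O = O * code.listProj l := by
  induction l with
  | nil => simp [listProj]
  | cons a l ih =>
    rw [listProj_cons, mul_assoc, ih fun b hb => h b (by simp [hb]), ← mul_assoc,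
      h a (by simp), mul_assoc]

lemma listProj_comm (l l' : List (Fin code.m)) :
    code.listProj l * code.listProj l' = code.listProj l' * code.listProj l :=
  code.listProj_comm_of fun a _ => (code.listProj_comm_of fun b _ => code.comm b a).symm

lemma P_comm_listProj (a : Fin code.m) (l : List (Fin code.m)) :
    code.P a * code.listProj l = code.listProj l * code.P a :=
  (code.listProj_comm_of fun b _ => code.comm b a).symm

lemma listProj_idem (l : List (Fin code.m)) :
    code.listProj l * code.listProj l = code.listProj l := by
  induction l with
  | nil => simp [listProj]
  | cons a l ih =>
    rw [listProj_cons]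
    calc _ = code.P a * (code.listProj l * code.P a) * code.listProj l := by simp only [mul_assoc]
      _ = (code.P a * code.P a) * (code.listProj l * code.listProj l) := by
        rw [← P_comm_listProj]; simp only [mul_assoc]
      _ = _ := by rw [ih, code.idem]

lemma listProj_herm (l : List (Fin code.m)) : (code.listProj l).IsHermitian := by
  induction l with
  | nil => simp [listProj]
  | cons a l ih =>
    rw [listProj_cons, Matrix.IsHermitian, conjTranspose_mul, ih.eq, (code.herm a).eq,
      P_comm_listProj]

lemma listProj_split (p : Fin code.m → Prop) [DecidablePred p] (l : List (Fin code.m)) :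
    code.listProj l =
      code.listProj (l.filter fun a => p a) * code.listProj (l.filter fun a => ¬ p a) := by
  induction l with
  | nil => simp [listProj]
  | cons a l ih =>
    by_cases h : p a
    · simp only [List.filter_cons, h, decide_true, if_true, not_true, decide_false,
        listProj_cons, ih, mul_assoc, Bool.false_eq_true, if_false]
    · simp only [List.filter_cons, h, decide_true, if_true, decide_false, not_false_eq_true,
        listProj_cons, Bool.false_eq_true, if_false]
      rw [ih, ← mul_assoc, P_comm_listProj, mul_assoc]

lemma supportedOn_listProj [NeZero q] {l : List (Fin code.m)} {T : Finset Λ}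
    (h : ∀ a ∈ l, code.S a ⊆ T) : SupportedOn q T (code.listProj l) := by
  induction l with
  | nil => exact supportedOn_one T
  | cons a l ih =>
    rw [listProj_cons]
    exact ((code.supp a).mono (h a (by simp))).mul (ih fun b hb => h b (by simp [hb]))

lemma listProj_comm_of_disjoint [NeZero q] {l : List (Fin code.m)} {T : Finset Λ}
    {O : Matrix (Λ → Fin q) (Λ → Fin q) ℂ} (hO : SupportedOn q T O)
    (h : ∀ a ∈ l, Disjoint (code.S a) T) : code.listProj l * O = O * code.listProj l :=
  code.listProj_comm_of fun a ha => (code.supp a).commute hO (h a ha)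

lemma proj_idem : code.proj * code.proj = code.proj := code.listProj_idem _

lemma proj_herm : code.proj.IsHermitian := code.listProj_herm _

variable {code}

lemma Correctable.mono [NeZero q] {M N : Finset Λ} (h : code.Correctable N) (hMN : M ⊆ N) :
    code.Correctable M := fun O hO => h O (hO.mono hMN)

/-- The union of two correctable regions is correctable when no constraint meets both. -/
lemma Correctable.union [NeZero q] {A B : Finset Λ} (hA : code.Correctable A)
    (hB : code.Correctable B) (h : ∀ a, Disjoint (code.S a) A ∨ Disjoint (code.S a) B) :
    code.Correctable (A ∪ B) := by
  classical
  intro O hO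
  -- `P` collects the constraints meeting `A`, and `Q` the others.
  set P := code.listProj ((List.finRange code.m).filter fun a => ¬ Disjoint (code.S a) A) with hP
  set Q := code.listProj ((List.finRange code.m).filter fun a => ¬¬ Disjoint (code.S a) A) with hQ
  have hPQ : code.proj = P * Q := code.listProj_split _ _
  have hcomm : P * Q = Q * P := code.listProj_comm _ _
  have hPP : P * P = P := code.listProj_idem _
  have hQQ : Q * Q = Q := code.listProj_idem _
  have key : ∀ E F, SupportedOn q A E → SupportedOn q B F →
      ∃ c : ℂ, code.proj * (E * F) * code.proj = c • code.proj := by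
    intro E F hE hF
    obtain ⟨c, hc⟩ := hA E hE
    obtain ⟨c', hc'⟩ := hB F hF
    have hQE : Q * E = E * Q := code.listProj_comm_of_disjoint hE fun a ha => by
      simpa using (List.mem_filter.1 ha).2
    have hPF : P * F = F * P := code.listProj_comm_of_disjoint hF fun a ha => by
      have := (List.mem_filter.1 ha).2
      exact (h a).resolve_left (by simpa using this)
    refine ⟨c * c', ?_⟩
    have e : code.proj * (E * F) * code.proj =
        (code.proj * E * code.proj) * (code.proj * F * code.proj) := by
      have l1 : code.proj * E * code.proj = P * E * (P * Q) := by
        rw [hPQ]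
        calc P * Q * E * (P * Q) = P * (Q * E) * (P * Q) := by simp only [mul_assoc]
          _ = P * E * (Q * P) * Q := by rw [hQE]; simp only [mul_assoc]
          _ = P * E * P * (Q * Q) := by rw [← hcomm]; simp only [mul_assoc]
          _ = _ := by rw [hQQ]; simp only [mul_assoc]
      have l2 : code.proj * F * code.proj = (Q * P) * F * Q := by
        rw [hPQ]
        calc P * Q * F * (P * Q) = Q * (P * F) * P * Q := by
              rw [← mul_assoc (P * Q * F), hcomm]; simp only [mul_assoc]
          _ = Q * F * (P * P) * Q := by rw [hPF]; simp only [mul_assoc]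
          _ = Q * (F * P) * Q := by rw [hPP]; simp only [mul_assoc]
          _ = _ := by rw [← hPF]; simp only [mul_assoc]
      rw [l1, l2, hPQ]
      calc P * Q * (E * F) * (P * Q) = P * (Q * E) * (F * P) * Q := by simp only [mul_assoc]
        _ = P * E * Q * P * F * Q := by rw [hQE, ← hPF]; simp only [mul_assoc]
        _ = P * E * (P * Q * P) * F * Q := by
          rw [hcomm, mul_assoc Q, hPP]; simp only [mul_assoc]
        _ = P * E * (P * (Q * Q) * P) * F * Q := by rw [hQQ]
        _ = _ := by simp only [mul_assoc]
    rw [e, hc, hc', smul_mul_smul_comm, proj_idem]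
  choose c hc using fun a b => key (unitOp A a b) (partialElem A a b O)
    (supportedOn_unitOp A a b) (supportedOn_partialElem hO a b)
  refine ⟨∑ a, ∑ b, c a b, ?_⟩
  conv_lhs => rw [← sum_unitOp_mul_partialElem A O]
  simp only [Finset.mul_sum, Finset.sum_mul, hc, Finset.sum_smul]

/-- Expansion: if `A` and `B` are correctable and `B` contains the outer boundary of `A`, then
`A ∪ B` is correctable. Erasing `A` from a code state, replacing it by the maximally mixed state
and projecting back with the constraints meeting `A` restores the state up to a nonzero factor.
Hence expectation values on `A ∪ B` are determined by those on `B`. -/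
lemma Correctable.expand [NeZero q] {A B : Finset Λ} (hA : code.Correctable A)
    (hB : code.Correctable B) (h : ∀ a, Disjoint (code.S a) A ∨ code.S a ⊆ A ∪ B) :
    code.Correctable (A ∪ B) := by
  classical
  intro O hO
  set P := code.listProj ((List.finRange code.m).filter fun a => ¬ Disjoint (code.S a) A) with hP
  set Q := code.listProj ((List.finRange code.m).filter fun a => ¬¬ Disjoint (code.S a) A) with hQ
  have hPQ : code.proj = P * Q := code.listProj_split _ _
  have hcomm : P * Q = Q * P := code.listProj_comm _ _
  have hQQ : Q * Q = Q := code.listProj_idem _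
  have hPs : SupportedOn q (A ∪ B) P := code.supportedOn_listProj fun a ha =>
    (h a).resolve_left (by simpa using (List.mem_filter.1 ha).2)
  choose c hc using fun a b => hA (unitOp A a b) (supportedOn_unitOp A a b)
  have hQE : ∀ a b, Q * unitOp A a b = unitOp A a b * Q := fun a b =>
    code.listProj_comm_of_disjoint (supportedOn_unitOp A a b) fun a ha => by
      simpa using (List.mem_filter.1 ha).2
  have hPOP : SupportedOn q (A ∪ B) (P * O * P) := (hPs.mul hO).mul hPs
  obtain ⟨μ, hμ⟩ := hB (∑ a, partialElem A a a (P * O * P))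
    (supportedOn_sum _ _ fun a _ => supportedOn_partialElem hPOP a a)
  have hterm : ∀ a b, code.proj * (unitOp A b a * (P * O * P) * unitOp A a b) * code.proj =
      (c b a * c a b) • (code.proj * O * code.proj) := by
    intro a b
    have hPiQ : code.proj * Q = code.proj := by rw [hPQ, mul_assoc, hQQ]
    have hQPi : Q * code.proj = code.proj := by rw [hPQ, hcomm, ← mul_assoc, hQQ]
    calc code.proj * (unitOp A b a * (P * O * P) * unitOp A a b) * code.proj
        = code.proj * Q * (unitOp A b a * (P * O * P) * unitOp A a b) * (Q * code.proj) := by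
          rw [hPiQ, hQPi]
      _ = code.proj * (Q * unitOp A b a) * (P * O * P) * (unitOp A a b * Q) * code.proj := by
          simp only [mul_assoc]
      _ = code.proj * unitOp A b a * (Q * P) * O * (P * Q) * unitOp A a b * code.proj := by
          rw [hQE b a, ← hQE a b]; simp only [mul_assoc]
      _ = code.proj * unitOp A b a * (code.proj * code.proj) * O * (code.proj * code.proj) *
            unitOp A a b * code.proj := by
          rw [← hcomm, proj_idem, hPQ]
      _ = (code.proj * unitOp A b a * code.proj) * (code.proj * O * code.proj) *
            (code.proj * unitOp A a b * code.proj) := by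
          simp only [mul_assoc]
      _ = _ := by
          rw [hc, hc, smul_mul_assoc, smul_mul_smul_comm]
          congr 1
          calc _ = (code.proj * code.proj) * O * (code.proj * code.proj) := by
                simp only [mul_assoc]
            _ = _ := by rw [proj_idem]
  have hsum : (∑ a, ∑ b, c b a * c a b) • (code.proj * O * code.proj) = μ • code.proj := by
    rw [← hμ]
    simp only [partialElem, Finset.mul_sum, Finset.sum_mul, hterm, Finset.sum_smul]
  have hne : code.proj ≠ 0 := code.nonzero
  have hconj : ∀ a b, c b a = star (c a b) := by
    intro a b
    have := congrArg conjTranspose (hc a b)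
    rw [conjTranspose_mul, conjTranspose_mul, unitOp_conjTranspose, code.proj_herm.eq,
      conjTranspose_smul, code.proj_herm.eq, ← mul_assoc, hc] at this
    exact smul_left_injective ℂ hne this
  have htr : ∑ a, c a a = 1 := by
    have : (∑ a, c a a) • code.proj = (1 : ℂ) • code.proj := by
      rw [Finset.sum_smul, ← Finset.sum_congr rfl fun a _ => hc a a, ← Finset.sum_mul,
        ← Finset.mul_sum, sum_unitOp, mul_one, proj_idem, one_smul]
    exact smul_left_injective ℂ hne this
  have hl : (∑ a, ∑ b, c b a * c a b) = ((∑ a, ∑ b, ‖c a b‖ ^ 2 : ℝ) : ℂ) := by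
    push_cast
    refine Finset.sum_congr rfl fun a _ => Finset.sum_congr rfl fun b _ => ?_
    rw [hconj a b]
    exact Complex.conj_mul' _
  have hlam : (∑ a, ∑ b, c b a * c a b) ≠ 0 := by
    rw [hl]
    intro h0
    have h0' : (∑ a, ∑ b, ‖c a b‖ ^ 2 : ℝ) = 0 := by exact_mod_cast h0
    have h1 : ∀ a, c a a = 0 := by
      intro a
      rw [Finset.sum_eq_zero_iff_of_nonneg fun _ _ => Finset.sum_nonneg fun _ _ => sq_nonneg _]
        at h0'
      have h2 := h0' a (Finset.mem_univ _)
      rw [Finset.sum_eq_zero_iff_of_nonneg fun _ _ => sq_nonneg _] at h2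
      simpa using h2 a (Finset.mem_univ _)
    simp [h1] at htr
  refine ⟨(∑ a, ∑ b, c b a * c a b)⁻¹ * μ, ?_⟩
  rw [mul_smul, ← hsum, smul_smul, inv_mul_cancel₀ hlam, one_smul]

/-- A region splitting into correctable clusters, no two of which are met by a common
constraint, is correctable. -/
lemma Correctable.of_clusters [NeZero q] {ι : Type*} [DecidableEq ι] (f : Λ → ι) (M : Finset Λ)
    (h0 : code.Correctable ∅)
    (hsep : ∀ a, ∀ x ∈ code.S a, ∀ y ∈ code.S a, x ∈ M → y ∈ M → f x = f y)
    (hc : ∀ i, code.Correctable (M.filter fun x => f x = i)) : code.Correctable M := by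
  have key : ∀ T : Finset ι, code.Correctable (M.filter fun x => f x ∈ T) := by
    intro T
    induction T using Finset.induction_on with
    | empty => simpa using h0
    | insert i T hi ih =>
      have : (M.filter fun x => f x ∈ insert i T) =
          (M.filter fun x => f x = i) ∪ M.filter fun x => f x ∈ T := by
        ext x; simp; tauto
      rw [this]
      refine (hc i).union ih fun a => ?_
      by_contra! hcon
      obtain ⟨h1, h2⟩ := hcon
      obtain ⟨x, hx, hx'⟩ := Finset.not_disjoint_iff.1 h1
      obtain ⟨y, hy, hy'⟩ := Finset.not_disjoint_iff.1 h2
      rw [Finset.mem_filter] at hx' hy'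
      exact hi (hx'.2 ▸ hsep a x hx y hy hx'.1 hy'.1 ▸ hy'.2)
  have := key (M.image f)
  rwa [Finset.filter_true_of_mem fun x hx => Finset.mem_image_of_mem f hx] at this

lemma Correctable.exists_entry {S : Finset Λ} (hS : code.Correctable S)
    (p p' : {u : Λ // u ∈ S} → Fin q) : ∃ c : ℂ, ∀ y y',
      (∑ z, if z = glue S p' z then code.proj y (glue S p z) * code.proj z y' else 0) =
        c * code.proj y y' := by
  obtain ⟨c, hc⟩ := hS (unitOp S p p') (supportedOn_unitOp S p p')
  refine ⟨c, fun y y' => ?_⟩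
  have := congrFun (congrFun hc y) y'
  rw [Matrix.mul_apply, Matrix.smul_apply, smul_eq_mul] at this
  simpa only [mul_unitOp_apply, ite_mul, zero_mul] using this

/-- If two disjoint regions are correctable, the code dimension is at most that of the
Hilbert space of the remaining sites. -/
lemma rank_proj_le {A B : Finset Λ} (hA : code.Correctable A) (hB : code.Correctable B)
    (hd : Disjoint A B) : code.proj.rank ≤ q ^ (A ∪ B)ᶜ.card := by
  classical
  let f : ({u : Λ // u ∈ A} → Fin q) → ({u : Λ // u ∈ B} → Fin q) →
      ({u : Λ // u ∈ (A ∪ B)ᶜ} → Fin q) → (Λ → Fin q) := fun a b g u =>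
    if h : u ∈ A then a ⟨u, h⟩ else if h' : u ∈ B then b ⟨u, h'⟩ else
      g ⟨u, by simp [h, h']⟩
  have hnd : ∀ u, u ∈ B → u ∉ A := fun u hB hA => Finset.disjoint_left.1 hd hA hB
  have fA : ∀ a b g (u : {u : Λ // u ∈ A}), f a b g u = a u := fun a b g ⟨u, hu⟩ => by
    simp [f, hu]
  have fB : ∀ a b g (u : {u : Λ // u ∈ B}), f a b g u = b u := fun a b g ⟨u, hu⟩ => by
    simp [f, hu, hnd u hu]
  have fC : ∀ a b g (u : {u : Λ // u ∈ (A ∪ B)ᶜ}), f a b g u = g u := fun a b g ⟨u, hu⟩ => by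
    simp at hu
    simp [f, hu]
  have hf : Function.Bijective fun x : ({u : Λ // u ∈ A} → Fin q) × ({u : Λ // u ∈ B} → Fin q) ×
      ({u : Λ // u ∈ (A ∪ B)ᶜ} → Fin q) => f x.1 x.2.1 x.2.2 := by
    constructor
    · rintro ⟨a, b, g⟩ ⟨a', b', g'⟩ h
      simp only at h
      refine Prod.ext (funext fun u => ?_) (Prod.ext (funext fun u => ?_) (funext fun u => ?_))
      · simp only; rw [← fA a b g, ← fA a' b' g', h]
      · simp only; rw [← fB a b g, ← fB a' b' g', h]
      · simp only; rw [← fC a b g, ← fC a' b' g', h]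
    · intro x
      refine ⟨(fun u => x u, fun u => x u, fun u => x u), funext fun u => ?_⟩
      simp [f]
  have gA : ∀ p a b g, glue A p (f a b g) = f p b g := fun p a b g => by
    ext u; by_cases hu : u ∈ A <;> simp [glue, f, hu]
  have gB : ∀ p a b g, glue B p (f a b g) = f a p g := fun p a b g => by
    ext u; by_cases hu : u ∈ B
    · simp [glue, f, hu, hnd u hu]
    · simp [glue, f, hu]
  have eA : ∀ a b g a', f a b g = f a' b g ↔ a = a' := fun a b g a' =>
    ⟨fun h => congrArg Prod.fst (@hf.1 (a, b, g) (a', b, g) h), fun h => by rw [h]⟩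
  have eB : ∀ a b g b', f a b g = f a b' g ↔ b = b' := fun a b g b' =>
    ⟨fun h => congrArg (fun x => x.2.1) (@hf.1 (a, b, g) (a, b', g) h), fun h => by rw [h]⟩
  refine (tripartite_tradeoff code.proj f hf.2 code.proj_herm code.nonzero ?_ ?_).trans ?_
  · intro p p'
    obtain ⟨c, hc⟩ := hA.exists_entry p p'
    refine ⟨c, fun y y' => ?_⟩
    rw [← hc, ← hf.sum_comp]
    simp only [gA, eA, Fintype.sum_prod_type]
    rw [Finset.sum_eq_single p' (fun a _ h => by simp [h]) (by simp)]
    simp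
  · intro p p'
    obtain ⟨c, hc⟩ := hB.exists_entry p p'
    refine ⟨c, fun y y' => ?_⟩
    rw [← hc, ← hf.sum_comp]
    simp only [gB, eB, Fintype.sum_prod_type]
    refine Finset.sum_congr rfl fun a _ => ?_
    rw [Finset.sum_eq_single p' (fun a _ h => by simp [h]) (by simp)]
    simp
  · rw [Fintype.card_fun, Fintype.card_fin, Fintype.card_coe]

end CommProjCode

/-! ### Counting lattice sites -/

section Counting

lemma card_fin_interval_le (L : ℕ) (lo : ℤ) (len : ℕ) :
    (Finset.univ.filter fun i : Fin L => lo ≤ (i : ℤ) ∧ (i : ℤ) < lo + len).card ≤ len := by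
  have : (Finset.univ.filter fun i : Fin L => lo ≤ (i : ℤ) ∧ (i : ℤ) < lo + len).card ≤
      (Finset.Ico lo (lo + len)).card := by
    refine Finset.card_le_card_of_injOn (fun i : Fin L => (i : ℤ)) (fun i hi => ?_)
      (fun i _ j _ h => ?_)
    · simpa using hi
    · exact Fin.ext (by simpa using h)
  simpa using this

lemma card_box_le {D L : ℕ} (lo : Fin D → ℤ) (len : Fin D → ℕ) :
    (Finset.univ.filter fun x : Fin D → Fin L =>
      ∀ s, lo s ≤ (x s : ℤ) ∧ (x s : ℤ) < lo s + len s).card ≤ ∏ s, len s := by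
  have : (Finset.univ.filter fun x : Fin D → Fin L =>
      ∀ s, lo s ≤ (x s : ℤ) ∧ (x s : ℤ) < lo s + len s) ⊆ Fintype.piFinset fun s =>
        Finset.univ.filter fun i : Fin L => lo s ≤ (i : ℤ) ∧ (i : ℤ) < lo s + len s := by
    intro x hx
    simpa [Fintype.mem_piFinset] using hx
  refine (Finset.card_le_card this).trans ?_
  rw [Fintype.card_piFinset]
  exact Finset.prod_le_prod' fun s _ => card_fin_interval_le L (lo s) (len s)

lemma prod_ite_single {D : ℕ} (t : Fin D) (a b : ℕ) :
    ∏ s : Fin D, (if s = t then a else b) = a * b ^ (D - 1) := by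
  rw [← Finset.mul_prod_erase Finset.univ _ (Finset.mem_univ t), if_pos rfl,
    Finset.prod_congr rfl fun s hs => if_neg (Finset.ne_of_mem_erase hs)]
  simp

/-- The sites of the lattice within sup-distance `r` of the integer point `v`; the cube is
half-open and has side `2 * r`. -/
def cube {D : ℕ} (L : ℕ) (v : Fin D → ℤ) (r : ℕ) : Finset (Fin D → Fin L) :=
  Finset.univ.filter fun x => ∀ s, v s - r ≤ (x s : ℤ) ∧ (x s : ℤ) < v s + r

lemma card_shell_le {D L : ℕ} (v : Fin D → ℤ) (r w : ℕ) :
    (cube L v (r + w) \ cube L v r).card ≤ 2 * D * w * (2 * (r + w)) ^ (D - 1) := by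
  classical
  have hsub : cube L v (r + w) \ cube L v r ⊆
      (Finset.univ : Finset (Fin D × Bool)).biUnion fun p =>
        Finset.univ.filter fun x : Fin D → Fin L => ∀ s,
          (if s = p.1 ∧ p.2 = true then v s + r else v s - (r + w : ℕ)) ≤ (x s : ℤ) ∧
          (x s : ℤ) < (if s = p.1 ∧ p.2 = true then v s + r else v s - (r + w : ℕ)) +
            ((if s = p.1 then w else 2 * (r + w) : ℕ) : ℤ) := by
    intro x hx
    simp only [cube, Finset.mem_sdiff, Finset.mem_filter, Finset.mem_univ, true_and,
      not_forall] at hx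
    obtain ⟨hx, t, ht⟩ := hx
    simp only [Finset.mem_biUnion, Finset.mem_filter, Finset.mem_univ, true_and]
    by_cases h : v t + r ≤ (x t : ℤ)
    · refine ⟨(t, true), fun s => ?_⟩
      have := hx s
      by_cases hs : s = t
      · subst hs
        simp only [and_self, if_true]
        push_cast at *
        omega
      · simp only [hs, false_and, if_false]
        push_cast at *
        omega
    · refine ⟨(t, false), fun s => ?_⟩
      have := hx s
      by_cases hs : s = t
      · subst hs
        simp only [Bool.false_eq_true, and_false, if_true, if_false]
        push_cast at *
        omega
      · simp only [hs, false_and, if_false]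
        push_cast at *
        omega
  refine (Finset.card_le_card hsub).trans (Finset.card_biUnion_le.trans ?_)
  refine (Finset.sum_le_card_nsmul _ _ (w * (2 * (r + w)) ^ (D - 1)) fun p _ => ?_).trans ?_
  · refine (card_box_le _ _).trans (le_of_eq ?_)
    exact prod_ite_single p.1 w (2 * (r + w))
  · simp only [Finset.card_univ, Fintype.card_prod, Fintype.card_fin, Fintype.card_bool,
      smul_eq_mul]
    exact le_of_eq (by ring)

/-- The walls of the decomposition, in each coordinate, are the `a` with `(a + 2 * w) % R < w`.
Writing `a + 2w = mR + r`: nearby coordinates lie in the same period when both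
are in a wall (`r < w`) or both are outside the walls. -/
lemma div_eq_of_near {R w a b : ℕ} (hR : 4 * w ≤ R) (hab : a < b + w) (hba : b < a + w)
    (h : (a + 2 * w) % R < w ↔ (b + 2 * w) % R < w) : (a + 2 * w) / R = (b + 2 * w) / R := by
  have hRpos : 0 < R := by omega
  have ha := Nat.div_add_mod (a + 2 * w) R
  have hb := Nat.div_add_mod (b + 2 * w) R
  have ha' := Nat.mod_lt (a + 2 * w) hRpos
  have hb' := Nat.mod_lt (b + 2 * w) hRpos
  generalize (a + 2 * w) / R = m at *
  generalize (b + 2 * w) / R = n at *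
  generalize (a + 2 * w) % R = r at *
  generalize (b + 2 * w) % R = s at *
  rcases lt_trichotomy m n with hmn | hmn | hmn
  · obtain ⟨k, rfl⟩ := Nat.exists_eq_add_of_lt hmn
    have : R * (m + k + 1) = R * m + R * k + R := by ring
    have h0 := Nat.zero_le (R * k)
    omega
  · exact hmn
  · obtain ⟨k, rfl⟩ := Nat.exists_eq_add_of_lt hmn
    have : R * (n + k + 1) = R * n + R * k + R := by ring
    have h0 := Nat.zero_le (R * k)
    omega

/-- A coordinate within range `w` of a wall lies in the thickened wall, of width `3 * w`. -/
lemma wide_of_near {R w a b : ℕ} (hR : 4 * w ≤ R) (hab : a < b + w) (hba : b < a + w)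
    (h : (a + 2 * w) % R < w) : (b + 3 * w) % R < 3 * w := by
  have ha := Nat.div_add_mod (a + 2 * w) R
  generalize (a + 2 * w) / R = m at *
  generalize (a + 2 * w) % R = r at *
  have : b + 3 * w = (b + 3 * w - R * m) + R * m := by omega
  rw [this, Nat.add_mul_mod_self_left, Nat.mod_eq_of_lt (by omega)]
  omega

/-- Thickened walls have density `O(w / R)`. The shift by `3 * w` makes the count proportional to
`L` even when `L < R`: the coordinates of `Fin L` that are nonnegative and below `R - 3 * w` avoid
every thickened wall. -/
lemma card_wide_le {R w : ℕ} (L : ℕ) (hw : 1 ≤ w) (hR : 4 * w ≤ R) :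
    R * (Finset.univ.filter fun i : Fin L => ((i : ℕ) + 3 * w) % R < 3 * w).card
      ≤ 12 * w * L := by
  have hRpos : 0 < R := by omega
  have hcard : (Finset.univ.filter fun i : Fin L => ((i : ℕ) + 3 * w) % R < 3 * w).card ≤
      (Finset.Icc 1 ((L + 3 * w) / R) ×ˢ Finset.range (3 * w)).card := by
    refine Finset.card_le_card_of_injOn
      (fun i : Fin L => (((i : ℕ) + 3 * w) / R, ((i : ℕ) + 3 * w) % R)) (fun i hi => ?_)
      (fun i _ j _ h => ?_)
    · simp only [Finset.coe_filter, Finset.mem_univ, true_and, Set.mem_ofPred_eq] at hi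
      simp only [Finset.coe_product, Set.mem_prod, Finset.mem_coe, Finset.mem_Icc,
        Finset.mem_range]
      refine ⟨⟨?_, Nat.div_le_div_right (by omega)⟩, hi⟩
      by_contra hc
      -- In the zeroth period the remainder is the number itself, which is at least `3 * w`.
      have h0 : ((i : ℕ) + 3 * w) / R = 0 := Nat.eq_zero_of_not_pos hc
      have h1 := Nat.div_add_mod ((i : ℕ) + 3 * w) R
      rw [h0, mul_zero] at h1
      omega
    · simp only [Prod.mk.injEq] at h
      have h1 := Nat.div_add_mod ((i : ℕ) + 3 * w) R
      have h2 := Nat.div_add_mod ((j : ℕ) + 3 * w) R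
      rw [h.1, h.2] at h1
      exact Fin.ext (by omega)
  rw [Finset.card_product, Nat.card_Icc, Finset.card_range, Nat.add_sub_cancel] at hcard
  have hdiv : R * ((L + 3 * w) / R) ≤ 4 * L := by
    by_cases h : L + 3 * w < R
    · rw [Nat.div_eq_of_lt h]; omega
    · have := Nat.mul_div_le (L + 3 * w) R
      omega
  calc _ ≤ R * ((L + 3 * w) / R * (3 * w)) := Nat.mul_le_mul_left _ hcard
    _ = R * ((L + 3 * w) / R) * (3 * w) := by ring
    _ ≤ 4 * L * (3 * w) := Nat.mul_le_mul_right _ hdiv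
    _ = _ := by ring

lemma card_two_wide_le {D R w : ℕ} (L : ℕ) (hD : 2 ≤ D) (hw : 1 ≤ w) (hR : 4 * w ≤ R)
    (t s : Fin D) (hts : t ≠ s) :
    R ^ 2 * (Finset.univ.filter fun x : Fin D → Fin L =>
      ((x t : ℕ) + 3 * w) % R < 3 * w ∧ ((x s : ℕ) + 3 * w) % R < 3 * w).card ≤
      144 * w ^ 2 * L ^ D := by
  classical
  set W := Finset.univ.filter fun i : Fin L => ((i : ℕ) + 3 * w) % R < 3 * w with hW
  have hsub : (Finset.univ.filter fun x : Fin D → Fin L =>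
      ((x t : ℕ) + 3 * w) % R < 3 * w ∧ ((x s : ℕ) + 3 * w) % R < 3 * w) ⊆
      Fintype.piFinset fun i : Fin D => if i ∈ ({t, s} : Finset (Fin D)) then W
        else Finset.univ := by
    intro x hx
    simp only [Finset.mem_filter, Finset.mem_univ, true_and] at hx
    rw [Fintype.mem_piFinset]
    intro i
    split_ifs with hi
    · simp only [Finset.mem_insert, Finset.mem_singleton] at hi
      rcases hi with rfl | rfl
      · simpa [hW] using hx.1
      · simpa [hW] using hx.2
    · simp
  have hcard : (Fintype.piFinset fun i : Fin D => if i ∈ ({t, s} : Finset (Fin D)) then W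
        else Finset.univ).card = W.card ^ 2 * L ^ (D - 2) := by
    rw [Fintype.card_piFinset]
    have : ∀ i : Fin D, (if i ∈ ({t, s} : Finset (Fin D)) then W else Finset.univ).card =
        if i ∈ ({t, s} : Finset (Fin D)) then W.card else L := fun i => by
      split_ifs <;> simp
    rw [Finset.prod_congr rfl fun i _ => this i, Finset.prod_ite, Finset.prod_const,
      Finset.prod_const, Finset.filter_mem_eq_inter, Finset.univ_inter,
      Finset.card_pair hts, Finset.filter_notMem_eq_sdiff, ← Finset.compl_eq_univ_sdiff,
      Finset.card_compl, Finset.card_pair hts, Fintype.card_fin]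
  have hWle := card_wide_le L hw hR
  rw [← hW] at hWle
  calc _ ≤ R ^ 2 * (W.card ^ 2 * L ^ (D - 2)) :=
        Nat.mul_le_mul_left _ ((Finset.card_le_card hsub).trans hcard.le)
    _ = (R * W.card) ^ 2 * L ^ (D - 2) := by ring
    _ ≤ (12 * w * L) ^ 2 * L ^ (D - 2) := Nat.mul_le_mul_right _ (Nat.pow_le_pow_left hWle 2)
    _ = 144 * w ^ 2 * (L ^ 2 * L ^ (D - 2)) := by ring
    _ = _ := by rw [← pow_add, Nat.add_sub_cancel' hD]

end Counting

/-! ### The cellular decomposition -/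

section Lattice

variable {D L w q d J : ℕ} {code : CommProjCode q (Fin D → Fin L)}

/-- Cubes are correctable as long as the boundary shells met when growing them are small: a cube
of half-side `j * w` is enlarged by a shell of thickness `w`, which has fewer than `d` sites. Only
this surface, and not the volume of the cube, is compared with `d`. -/
lemma correctable_cube [NeZero q]
    (hnear : ∀ a, ∀ x ∈ code.S a, ∀ y ∈ code.S a, ∀ t, (x t : ℕ) < (y t : ℕ) + w)
    (hd : 1 ≤ d) (hcorr : ∀ M : Finset (Fin D → Fin L), M.card < d → code.Correctable M)
    (hD : 2 ≤ D) (hJ : 2 * D * w * (2 * (J * w)) ^ (D - 1) < d) (v : Fin D → ℤ) :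
    ∀ j ≤ J, code.Correctable (cube L v (j * w)) := by
  intro j
  induction j with
  | zero =>
    intro _
    refine hcorr _ ?_
    have : cube L v (0 * w) = ∅ := by
      refine Finset.filter_eq_empty_iff.2 fun x _ h => ?_
      have := h ⟨0, by omega⟩
      simp only [zero_mul, Nat.cast_zero] at this
      omega
    rw [this, Finset.card_empty]
    exact hd
  | succ j ih =>
    intro hj
    have hmono : cube L v (j * w) ⊆ cube L v ((j + 1) * w) := by
      intro x hx
      simp only [cube, Finset.mem_filter, Finset.mem_univ, true_and] at hx ⊢
      intro s
      have := hx s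
      have e : (j + 1) * w = j * w + w := by ring
      rw [e]; push_cast at *; omega
    have hB : code.Correctable (cube L v ((j + 1) * w) \ cube L v (j * w)) := by
      refine hcorr _ (lt_of_le_of_lt ?_ hJ)
      have e : (j + 1) * w = j * w + w := by ring
      rw [e]
      refine (card_shell_le v (j * w) w).trans ?_
      rw [← e]
      gcongr
    have h := (ih (by omega)).expand hB fun a => ?_
    · rwa [Finset.union_sdiff_of_subset hmono] at h
    · rw [Finset.union_sdiff_of_subset hmono]
      by_contra! hcon
      obtain ⟨h1, h2⟩ := hcon
      obtain ⟨x, hx, hx'⟩ := Finset.not_disjoint_iff.1 h1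
      refine h2 fun y hy => ?_
      simp only [cube, Finset.mem_filter, Finset.mem_univ, true_and] at hx' ⊢
      intro s
      have := hx' s
      have n1 := hnear a x hx y hy s
      have n2 := hnear a y hy x hx s
      have e : (j + 1) * w = j * w + w := by ring
      rw [e]; push_cast at *; omega

/-- The cellular decomposition of the lattice into two correctable regions and a remainder
of density `O(1 / J ^ 2)`. Cells have side `2 * J * w`. The region `A` consists of the sites in no
wall, and `B` of the sites in exactly one wall that are away from the thickened walls of all other
directions. A remaining site lies in thickened walls of two different directions. -/
lemma exists_decomposition [NeZero q]
    (hnear : ∀ a, ∀ x ∈ code.S a, ∀ y ∈ code.S a, ∀ t, (x t : ℕ) < (y t : ℕ) + w)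
    (hd : 1 ≤ d) (hcorr : ∀ M : Finset (Fin D → Fin L), M.card < d → code.Correctable M)
    (hD : 2 ≤ D) (hw : 1 ≤ w) (hJ : 2 * D * w * (2 * (J * w)) ^ (D - 1) < d) :
    ∃ A B, code.Correctable A ∧ code.Correctable B ∧ Disjoint A B ∧
      (A ∪ B)ᶜ.card * (J + 1) ^ 2 ≤ 144 * D ^ 2 * L ^ D := by
  classical
  have hempty : code.Correctable ∅ := hcorr ∅ (by rw [Finset.card_empty]; omega)
  -- For `J < 2` the walls may fill a cell, and the bound holds with the whole lattice as remainder.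
  by_cases hJ2 : J < 2
  · refine ⟨∅, ∅, hempty, hempty, by simp, ?_⟩
    simp only [Finset.union_empty, Finset.compl_empty, Finset.card_univ, Fintype.card_fun,
      Fintype.card_fin]
    have h1 : (J + 1) ^ 2 ≤ 2 ^ 2 := Nat.pow_le_pow_left (by omega) 2
    have h2 : 1 ≤ D ^ 2 := Nat.one_le_pow _ _ (by omega)
    calc L ^ D * (J + 1) ^ 2 ≤ L ^ D * (144 * D ^ 2) := Nat.mul_le_mul_left _ (by omega)
      _ = _ := by ring
  set R := 2 * (J * w) with hRdef
  have hR : 4 * w ≤ R := by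
    have : 2 * w ≤ J * w := Nat.mul_le_mul_right _ (by omega)
    omega
  have hRpos : 0 < R := by omega
  -- `x` lies in a wall in direction `s` when `(x s + 2 * w) % R < w`, and in a thickened wall
  -- when `(x s + 3 * w) % R < 3 * w`.
  set A : Finset (Fin D → Fin L) := Finset.univ.filter fun x =>
    ∀ s, ¬ ((x s : ℕ) + 2 * w) % R < w with hA
  set B : Finset (Fin D → Fin L) := Finset.univ.filter fun x =>
    ∃ t, ((x t : ℕ) + 2 * w) % R < w ∧ ∀ s, s ≠ t → ¬ ((x s : ℕ) + 3 * w) % R < 3 * w with hB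
  have hnw : ∀ x : Fin L, ((x : ℕ) + 2 * w) % R < w → ((x : ℕ) + 3 * w) % R < 3 * w :=
    fun x h => wide_of_near hR (by omega) (by omega) h
  refine ⟨A, B, ?_, ?_, ?_, ?_⟩
  · refine CommProjCode.Correctable.of_clusters
      (fun x s => ((x s : ℕ) + 2 * w) / R) A hempty ?_ ?_
    · intro a x hx y hy hxA hyA
      simp only [hA, Finset.mem_filter, Finset.mem_univ, true_and] at hxA hyA
      funext s
      exact div_eq_of_near hR (hnear a x hx y hy s) (hnear a y hy x hx s)
        (iff_of_false (hxA s) (hyA s))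
    · intro i
      refine (correctable_cube hnear hd hcorr hD hJ
        (fun s => (i s * R : ℤ) - 2 * w + J * w) J le_rfl).mono fun x hx => ?_
      simp only [Finset.mem_filter, cube, Finset.mem_univ, true_and] at hx ⊢
      intro s
      have h1 : ((x s : ℕ) + 2 * w) / R = i s := congrFun hx.2 s
      have h2 := Nat.div_add_mod ((x s : ℕ) + 2 * w) R
      have h3 := Nat.mod_lt ((x s : ℕ) + 2 * w) hRpos
      rw [h1] at h2
      have h4 : (R : ℤ) = 2 * (J * w) := by rw [hRdef]; push_cast; ring
      zify at h2 h3
      push_cast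
      have h5 : (R : ℤ) * i s = i s * R := mul_comm _ _
      rw [h5] at h2
      have h6 := Int.natCast_nonneg (((x s : ℕ) + 2 * w) % R)
      push_cast at h6
      generalize (J : ℤ) * w = jw at *
      constructor <;> linarith
  · refine CommProjCode.Correctable.of_clusters
      (fun x s => (((x s : ℕ) + 2 * w) / R, decide (((x s : ℕ) + 2 * w) % R < w))) B hempty ?_ ?_
    · intro a x hx y hy hxB hyB
      simp only [hB, Finset.mem_filter, Finset.mem_univ, true_and] at hxB hyB
      obtain ⟨t, ht, hxt⟩ := hxB
      obtain ⟨t', ht', hyt⟩ := hyB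
      have htt : t = t' := by
        by_contra hne
        exact hyt t hne (wide_of_near hR (hnear a x hx y hy t) (hnear a y hy x hx t) ht)
      subst htt
      funext s
      have hiff : ((x s : ℕ) + 2 * w) % R < w ↔ ((y s : ℕ) + 2 * w) % R < w := by
        by_cases hs : s = t
        · subst hs; exact iff_of_true ht ht'
        · exact iff_of_false (fun h => hxt s hs (hnw _ h)) (fun h => hyt s hs (hnw _ h))
      exact Prod.ext (div_eq_of_near hR (hnear a x hx y hy s) (hnear a y hy x hx s) hiff)
        (decide_eq_decide.2 hiff)
    · intro i
      refine hcorr _ (lt_of_le_of_lt ?_ hJ)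
      rcases Finset.eq_empty_or_nonempty (B.filter fun x =>
        (fun s => (((x s : ℕ) + 2 * w) / R, decide (((x s : ℕ) + 2 * w) % R < w))) = i)
        with he | ⟨x₀, hx₀⟩
      · rw [he]; simp
      rw [Finset.mem_filter] at hx₀
      obtain ⟨hx₀B, rfl⟩ := hx₀
      simp only [hB, Finset.mem_filter, Finset.mem_univ, true_and] at hx₀B
      obtain ⟨t, ht, -⟩ := hx₀B
      have hle : w * R ^ (D - 1) ≤ 2 * D * w * R ^ (D - 1) := by
        rw [mul_assoc (2 * D)]
        exact Nat.le_mul_of_pos_left _ (by omega)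
      refine le_trans (Finset.card_le_card fun x hx => ?_) ((card_box_le
        (fun s => (R * (((x₀ s : ℕ) + 2 * w) / R : ℕ) : ℤ) - 2 * w)
        (fun s => if s = t then w else R)).trans ((prod_ite_single t w R).le.trans hle))
      simp only [Finset.mem_filter, Finset.mem_univ, true_and] at hx ⊢
      intro s
      have h1 := congrFun hx.2 s
      simp only [Prod.mk.injEq, decide_eq_decide] at h1
      have h2 := Nat.div_add_mod ((x s : ℕ) + 2 * w) R
      have h3 := Nat.mod_lt ((x s : ℕ) + 2 * w) hRpos
      rw [h1.1] at h2
      have h4 : s = t → ((x s : ℕ) + 2 * w) % R < w := by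
        rintro rfl; exact h1.2.2 ht
      generalize ((x s : ℕ) + 2 * w) % R = r at *
      generalize ((x₀ s : ℕ) + 2 * w) / R = m at *
      have h5 : ((R * m : ℕ) : ℤ) = R * m := by push_cast; ring
      rw [← h5]
      generalize R * m = rm at *
      split_ifs with hs
      · have := h4 hs
        omega
      · omega
  · rw [Finset.disjoint_left]
    intro x hxA hxB
    simp only [hA, hB, Finset.mem_filter, Finset.mem_univ, true_and] at hxA hxB
    obtain ⟨t, ht, -⟩ := hxB
    exact hxA t ht
  · have hsub : (A ∪ B)ᶜ ⊆ ((Finset.univ : Finset (Fin D × Fin D)).filter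
        fun p => p.1 ≠ p.2).biUnion fun p => Finset.univ.filter fun x : Fin D → Fin L =>
        ((x p.1 : ℕ) + 3 * w) % R < 3 * w ∧ ((x p.2 : ℕ) + 3 * w) % R < 3 * w := by
      intro x hx
      simp only [hA, hB, Finset.mem_compl, Finset.mem_union, Finset.mem_filter, Finset.mem_univ,
        true_and, not_or, not_forall, not_not, not_exists, not_and] at hx
      obtain ⟨⟨t, ht⟩, hx⟩ := hx
      obtain ⟨s, hst, hs⟩ := hx t ht
      simp only [Finset.mem_biUnion, Finset.mem_filter, Finset.mem_univ, true_and]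
      exact ⟨(t, s), Ne.symm hst, hnw _ ht, hs⟩
    have hcard : R ^ 2 * (A ∪ B)ᶜ.card ≤ D ^ 2 * (144 * w ^ 2 * L ^ D) := by
      calc R ^ 2 * (A ∪ B)ᶜ.card ≤ R ^ 2 * ∑ p ∈ (Finset.univ : Finset (Fin D × Fin D)).filter
              (fun p => p.1 ≠ p.2), (Finset.univ.filter fun x : Fin D → Fin L =>
              ((x p.1 : ℕ) + 3 * w) % R < 3 * w ∧ ((x p.2 : ℕ) + 3 * w) % R < 3 * w).card :=
            Nat.mul_le_mul_left _ ((Finset.card_le_card hsub).trans Finset.card_biUnion_le)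
        _ ≤ ((Finset.univ : Finset (Fin D × Fin D)).filter
              (fun p => p.1 ≠ p.2)).card • (144 * w ^ 2 * L ^ D) := by
            rw [Finset.mul_sum]
            refine Finset.sum_le_card_nsmul _ _ _ fun p hp => ?_
            exact card_two_wide_le L hD hw hR p.1 p.2 (Finset.mem_filter.1 hp).2
        _ ≤ D ^ 2 * (144 * w ^ 2 * L ^ D) := by
            rw [smul_eq_mul]
            refine Nat.mul_le_mul_right _ ((Finset.card_filter_le _ _).trans (le_of_eq ?_))
            simp [sq]
    have h2 : (w * (J + 1)) ^ 2 ≤ R ^ 2 := Nat.pow_le_pow_left (by rw [hRdef]; nlinarith) 2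
    refine le_of_mul_le_mul_left (a := w ^ 2) ?_ (by positivity)
    calc w ^ 2 * ((A ∪ B)ᶜ.card * (J + 1) ^ 2) = (w * (J + 1)) ^ 2 * (A ∪ B)ᶜ.card := by ring
      _ ≤ R ^ 2 * (A ∪ B)ᶜ.card := Nat.mul_le_mul_right _ h2
      _ ≤ _ := hcard
      _ = _ := by ring

/-- A scale `J` at which shells of cubes are still smaller than `d`, yet with `J + 1` at least of
order `d ^ (1 / (D - 1))`. It is the largest `J` below the first failure of the shell bound. -/
lemma exists_scale (hD : 2 ≤ D) (hw : 1 ≤ w) (hd : 1 ≤ d) :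
    ∃ J, 2 * D * w * (2 * (J * w)) ^ (D - 1) < d ∧ d ≤ (4 * D * w ^ 2 * (J + 1)) ^ (D - 1) := by
  have hup : ∀ J, 2 * D * w * (2 * (J * w)) ^ (D - 1) ≤ (4 * D * w ^ 2 * J) ^ (D - 1) := by
    intro J
    calc _ ≤ (2 * D * w) ^ (D - 1) * (2 * (J * w)) ^ (D - 1) := by
          refine Nat.mul_le_mul_right _ (Nat.le_self_pow (by omega) _)
      _ = _ := by rw [← mul_pow]; ring
  have hex : ∃ J, ¬ 2 * D * w * (2 * (J * w)) ^ (D - 1) < d := by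
    refine ⟨d, not_lt.2 ?_⟩
    have h1 : d ≤ 2 * (d * w) := by nlinarith
    have h2 : d ≤ (2 * (d * w)) ^ (D - 1) := h1.trans (Nat.le_self_pow (by omega) _)
    exact h2.trans (Nat.le_mul_of_pos_left _ (by positivity))
  classical
  have hne : Nat.find hex ≠ 0 := by
    intro h0
    have := Nat.find_spec hex
    rw [h0, zero_mul, mul_zero, zero_pow (by omega), mul_zero] at this
    omega
  obtain ⟨J, hJ⟩ := Nat.exists_eq_succ_of_ne_zero hne
  refine ⟨J, not_not.1 (Nat.find_min hex (by omega)), ?_⟩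
  have := Nat.find_spec hex
  rw [hJ] at this
  exact (not_lt.1 this).trans (hup _)

end Lattice

/-! ### The tradeoff -/

/-- **Tradeoff for `D`-dimensional commuting-projector codes.**
For every spatial dimension `D ≥ 2`, interaction range `w ≥ 1` and qudit dimension
`q ≥ 2` there is a constant `c > 0` such that for every `L ≥ 1`, every
commuting-projector code on the `D`-dimensional cubic lattice `(Fin L)^D` whose
constraints are supported on `w × ⋯ × w` cubes, and every `d ≥ 1` such that all
regions of size `< d` are correctable, the number of encoded qubits obeys
`k = log₂ rank Π ≤ c n / d^(2/(D-1))` with `n = L^D`. -/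
theorem quantum_tradeoff_Dd :
    ∀ D w q : ℕ, 2 ≤ D → 1 ≤ w → 2 ≤ q → ∃ c : ℝ, 0 < c ∧
      ∀ L : ℕ, 1 ≤ L → ∀ code : CommProjCode q (Fin D → Fin L),
        (∀ a : Fin code.m, ∃ v : Fin D → ℕ, ∀ u ∈ code.S a, ∀ t : Fin D,
            v t ≤ (u t).val ∧ (u t).val < v t + w) →
        ∀ d : ℕ, 1 ≤ d →
          (∀ M : Finset (Fin D → Fin L), M.card < d → code.Correctable M) →
          Real.logb 2 (code.proj.rank) ≤
            c * ((L : ℝ) ^ D) / ((d : ℝ) ^ ((2 : ℝ) / ((D : ℝ) - 1))) := by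
  intro D w q hD hw hq
  have : NeZero q := ⟨by omega⟩
  have hlogq : 0 < Real.logb 2 q := Real.logb_pos (by norm_num) (by exact_mod_cast hq)
  have hD0 : (0 : ℝ) < D := by exact_mod_cast (by omega : 0 < D)
  have hw0 : (0 : ℝ) < w := by exact_mod_cast hw
  refine ⟨Real.logb 2 q * (16 * D ^ 2 * w ^ 4) * (144 * D ^ 2), by positivity, ?_⟩
  intro L hL code hS d hd hcorr
  have hnear : ∀ a, ∀ x ∈ code.S a, ∀ y ∈ code.S a, ∀ t, (x t : ℕ) < (y t : ℕ) + w := by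
    intro a x hx y hy t
    obtain ⟨v, hv⟩ := hS a
    have h1 := hv x hx t
    have h2 := hv y hy t
    omega
  obtain ⟨J, hJ, hdJ⟩ := exists_scale (D := D) (w := w) (d := d) hD hw hd
  obtain ⟨A, B, hA, hB, hdisj, hcard⟩ := exists_decomposition hnear hd hcorr hD hw hJ
  have hrank := CommProjCode.rank_proj_le hA hB hdisj
  set N := (A ∪ B)ᶜ.card with hN
  have hrpos : 0 < code.proj.rank :=
    Nat.pos_of_ne_zero fun h => code.nonzero (eq_zero_of_rank_eq_zero h)
  have hk : Real.logb 2 code.proj.rank ≤ N * Real.logb 2 q := by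
    rw [← Real.logb_pow]
    exact Real.logb_le_logb_of_le (by norm_num) (by exact_mod_cast hrpos) (by exact_mod_cast hrank)
  have hd0 : (0 : ℝ) < d := by exact_mod_cast hd
  have hD1 : (0 : ℝ) < (D : ℝ) - 1 := by
    have : (2 : ℝ) ≤ D := by exact_mod_cast hD
    linarith
  have hpow : (d : ℝ) ^ ((2 : ℝ) / ((D : ℝ) - 1)) ≤ 16 * D ^ 2 * w ^ 4 * (J + 1) ^ 2 := by
    have h1 : (d : ℝ) ≤ (4 * D * w ^ 2 * (J + 1)) ^ ((D : ℝ) - 1) := by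
      have h2 : (D : ℝ) - 1 = ((D - 1 : ℕ) : ℝ) := by
        rw [Nat.cast_sub (by omega)]; simp
      rw [h2, Real.rpow_natCast]
      exact_mod_cast hdJ
    calc (d : ℝ) ^ ((2 : ℝ) / ((D : ℝ) - 1))
        ≤ ((4 * D * w ^ 2 * (J + 1)) ^ ((D : ℝ) - 1)) ^ ((2 : ℝ) / ((D : ℝ) - 1)) :=
          Real.rpow_le_rpow hd0.le h1 (by positivity)
      _ = (4 * D * w ^ 2 * (J + 1)) ^ (2 : ℝ) := by
          rw [← Real.rpow_mul (by positivity), mul_div_cancel₀ _ hD1.ne']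
      _ = _ := by rw [Real.rpow_two]; ring
  have hcard' : (N : ℝ) * (J + 1) ^ 2 ≤ 144 * D ^ 2 * L ^ D := by exact_mod_cast hcard
  rw [le_div_iff₀ (Real.rpow_pos_of_pos hd0 _)]
  calc Real.logb 2 code.proj.rank * (d : ℝ) ^ ((2 : ℝ) / ((D : ℝ) - 1))
      ≤ (N * Real.logb 2 q) * (16 * D ^ 2 * w ^ 4 * (J + 1) ^ 2) :=
        mul_le_mul hk hpow (by positivity) (by positivity)
    _ = Real.logb 2 q * (16 * D ^ 2 * w ^ 4) * (N * (J + 1) ^ 2) := by ring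
    _ ≤ Real.logb 2 q * (16 * D ^ 2 * w ^ 4) * (144 * D ^ 2 * L ^ D) :=
        mul_le_mul_of_nonneg_left hcard' (by positivity)
    _ = _ := by ring
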